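/- arXiv:1001.2092 — 2 statements merged into one kernel-verified Lean document; each statement's English description precedes it below -/
import Mathlib

section
/- Schur functions are eigenvectors of the cut-and-join operator: K s_μ = (κ_μ/2) s_μ, where K = (1/2) Σ_{i,j≥1} ( p_{i+j} · ij ∂²/∂pᵢ∂pⱼ + pᵢpⱼ (i+j) ∂/∂p_{i+j} ) and κ_μ = Σᵢ μᵢ(μᵢ - 2i + 1). -/
open Finset MvPolynomial

/- The ring of symmetric functions is modelled as `Λ = ℚ[p₁, p₂, …] = MvPolynomial ℕ ℚ`,
where the variable `X k` stands for the power sum `p_{k+1}`. -/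

/-- The complete homogeneous symmetric function `h_n`, as a polynomial in the power sums
via Newton's identity. -/
noncomputable def hp : ℕ → MvPolynomial ℕ ℚ
  | 0 => 1
  | n + 1 => ((n : ℚ) + 1)⁻¹ •
      ∑ k ∈ Finset.range (n + 1), MvPolynomial.X k * hp (n - k)
  decreasing_by exact Nat.sub_lt_succ n k

/-- `h_k` extended by `0` to negative indices. -/
noncomputable def HH (k : ℤ) : MvPolynomial ℕ ℚ := if k < 0 then 0 else hp k.toNat

/-- The Schur function `s_μ` as a polynomial in the power sums, via the Jacobi–Trudi
formula. -/
noncomputable def schur (l : ℕ) (μ : ℕ → ℕ) : MvPolynomial ℕ ℚ :=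
  Matrix.det (Matrix.of fun i j : Fin l => HH ((μ i : ℤ) + j - i))

/-- The cut-and-join operator
`K = (1/2) Σ_{i,j ≥ 1} ( p_{i+j} i j ∂²/∂pᵢ∂pⱼ + pᵢ pⱼ (i+j) ∂/∂p_{i+j} )`,
truncated to indices `i, j ≤ B` (which acts like `K` on any symmetric function involving
only `p₁, …, p_B`). -/
noncomputable def cutJoin (B : ℕ) (f : MvPolynomial ℕ ℚ) : MvPolynomial ℕ ℚ :=
  (2 : ℚ)⁻¹ • ∑ i ∈ Finset.Icc 1 B, ∑ j ∈ Finset.Icc 1 B,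
    (X (i + j - 1) * (((i * j : ℕ) : ℚ) • pderiv (i - 1) (pderiv (j - 1) f))
      + ((i + j : ℕ) : ℚ) • (X (i - 1) * X (j - 1) * pderiv (i + j - 1) f))

/-!
The Bernstein operators `B_n = ∑ⱼ (-1) ^ j h_{n+j} e_j^⊥` prepend a row to a Schur function:
expanding the Jacobi–Trudi determinant along its first row, `s_{(n, ν)} = B_n s_ν`. Their
commutators with multiplication by `p_k` and with `p_k^⊥ = k ∂/∂p_k` are the shifts `B_{n+k}` and
`B_{n-k}`, and Newton's identity becomes `n B_n = ∑ₖ (p_k B_{n-k} + B_{n+k} p_k^⊥)`. Applying this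
identity twice gives `K B_n = B_n (K - E + n (n - 1) / 2)` with `E` the Euler operator. As
`E s_ν = |ν| s_ν` and `κ_{(n, ν)} = κ_ν - 2 |ν| + n (n - 1)`, induction on the number of rows
yields the eigenvalue `κ_μ / 2`.
-/

namespace CutAndJoin

open Filter

local notation "Λ" => MvPolynomial ℕ ℚ

section Sums

lemma sum_Icc_one_sub_succ {M : Type*} [AddCommGroup M] (u : ℕ → M) (n : ℕ) :
    ∑ k ∈ Icc 1 n, (u k - u (k + 1)) = u 1 - u (n + 1) := by
  rw [← Ico_add_one_right_eq_Icc, sum_Ico_eq_sum_range, Nat.add_sub_cancel]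
  simp_rw [add_comm 1]
  exact sum_range_sub' (fun k => u (k + 1)) n

variable {M : Type*} [AddCommMonoid M] {N : ℕ}

lemma sum_Icc_add_left {u : ℕ → M} (hu : ∀ k, N < k → u k = 0) (i : ℕ) :
    ∑ j ∈ Icc 1 N, u (i + j) = ∑ k ∈ Icc 1 N with i < k, u k := by
  have hmap : ∑ j ∈ Icc 1 N, u (i + j) = ∑ k ∈ Icc (i + 1) (i + N), u k := by
    simp [← map_add_left_Icc]
  rw [hmap]
  refine (sum_subset (fun k hk => ?_) fun k hk hk' => hu k ?_).symm <;>
    simp only [mem_filter, mem_Icc] at * <;> omega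

lemma sum_sum_Icc_add {u : ℕ → M} (hu : ∀ k, N < k → u k = 0) :
    ∑ i ∈ Icc 1 N, ∑ j ∈ Icc 1 N, u (i + j) = ∑ k ∈ Icc 1 N, (k - 1) • u k := by
  simp_rw [sum_Icc_add_left hu, sum_filter]
  rw [sum_comm]
  refine sum_congr rfl fun k hk => ?_
  have hcard : {i ∈ Icc 1 N | i < k} = Ico 1 k := by
    ext i
    simp only [mem_filter, mem_Icc, mem_Ico] at *
    omega
  rw [← sum_filter, hcard, sum_const, Nat.card_Ico]

lemma sum_sum_Icc_split_diag {g : ℕ → ℕ → M} (hl : ∀ a b, N < a → g a b = 0)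
    (hr : ∀ a b, N < b → g a b = 0) :
    ∑ a ∈ Icc 1 N, ∑ b ∈ Icc 1 N, (g (a + b) b + g a (a + b)) + ∑ a ∈ Icc 1 N, g a a
      = ∑ a ∈ Icc 1 N, ∑ b ∈ Icc 1 N, g a b := by
  have below : ∑ a ∈ Icc 1 N, ∑ b ∈ Icc 1 N, g (a + b) b
      = ∑ a ∈ Icc 1 N, ∑ b ∈ Icc 1 N, if b < a then g a b else 0 := by
    rw [sum_comm, sum_comm (t := Icc 1 N) (f := fun a b => if b < a then g a b else 0)]
    refine sum_congr rfl fun b _ => ?_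
    simp_rw [add_comm _ b, sum_Icc_add_left (u := (g · b)) (hl · b), sum_filter]
  have above : ∑ a ∈ Icc 1 N, ∑ b ∈ Icc 1 N, g a (a + b)
      = ∑ a ∈ Icc 1 N, ∑ b ∈ Icc 1 N, if a < b then g a b else 0 := by
    simp_rw [fun a => sum_Icc_add_left (hr a) a, sum_filter]
  simp_rw [sum_add_distrib]
  rw [below, above, ← sum_add_distrib, ← sum_add_distrib]
  refine sum_congr rfl fun a ha => ?_
  rw [← sum_ite_eq_of_mem (Icc 1 N) a (g a) ha, ← sum_add_distrib, ← sum_add_distrib]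
  refine sum_congr rfl fun b _ => ?_
  rcases lt_trichotomy a b with h | rfl | h
  · simp [h, h.ne, h.not_gt]
  · simp
  · simp [h, h.ne', h.not_gt]

end Sums

section PowerSums

/-- The power sum `p_k`, for `k ≥ 1`. -/
noncomputable def powerSum (k : ℕ) : Λ := X (k - 1)

/-- The derivation `p_k^⊥ = k ∂/∂p_k`, adjoint to multiplication by `p_k` for the Hall inner
product; it is `0` for `k = 0`. -/
noncomputable def powerSumPerp (k : ℕ) : Derivation ℚ Λ Λ := (k : ℚ) • pderiv (k - 1)

lemma powerSumPerp_apply (k : ℕ) (f : Λ) : powerSumPerp k f = (k : ℚ) • pderiv (k - 1) f := rfl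

lemma powerSumPerp_powerSum {i : ℕ} (hi : 1 ≤ i) (k : ℕ) :
    powerSumPerp k (powerSum i) = if k = i then (k : Λ) else 0 := by
  rcases k.eq_zero_or_pos with rfl | hk
  · simp [powerSumPerp_apply]
  · have hki : i - 1 = k - 1 ↔ k = i := by omega
    simp [powerSumPerp_apply, powerSum, pderiv_X, Pi.single_apply, hki, smul_eq_C_mul]

lemma powerSumPerp_C (k : ℕ) (a : ℚ) : powerSumPerp k (C a) = 0 :=
  (powerSumPerp k).map_algebraMap a

lemma powerSumPerp_powerSum_mul {i : ℕ} (hi : 1 ≤ i) (k : ℕ) (f : Λ) :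
    powerSumPerp k (powerSum i * f)
      = powerSum i * powerSumPerp k f + if k = i then k • f else 0 := by
  rw [Derivation.leibniz, powerSumPerp_powerSum hi, smul_eq_mul, smul_eq_mul, mul_ite, mul_zero,
    nsmul_eq_mul, mul_comm f]

lemma induction_on_powerSum {motive : Λ → Prop} (f : Λ) (C : ∀ a, motive (C a))
    (add : ∀ f g, motive f → motive g → motive (f + g))
    (powerSum_mul : ∀ k, 1 ≤ k → ∀ f, motive f → motive (powerSum k * f)) : motive f :=
  MvPolynomial.induction_on f C add fun f k hf =>
    mul_comm (X k) f ▸ powerSum_mul (k + 1) k.succ_pos f hf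

end PowerSums

section CompleteHomogeneous

lemma HH_of_neg {m : ℤ} (hm : m < 0) : HH m = 0 := if_pos hm

lemma HH_natCast (n : ℕ) : HH n = hp n := by simp [HH]

lemma HH_zero : HH 0 = 1 := by simp [HH, hp]

lemma natCast_mul_hp (n : ℕ) :
    (n : Λ) * hp n = ∑ k ∈ range n, X k * hp (n - 1 - k) := by
  rcases n with _ | n
  · simp
  · have hn : ((n + 1 : ℕ) : Λ) * C ((n : ℚ) + 1)⁻¹ = 1 := by
      rw [← map_natCast (C : ℚ →+* Λ), ← C_mul, Nat.cast_succ, mul_inv_cancel₀ (by positivity), C_1]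
    rw [hp, smul_eq_C_mul, ← mul_assoc, hn, one_mul, Nat.add_sub_cancel]

lemma intCast_mul_HH {m : ℤ} {N : ℕ} (hm : m ≤ N) :
    (m : Λ) * HH m = ∑ k ∈ Icc 1 N, powerSum k * HH (m - k) := by
  rcases lt_or_ge m 0 with hneg | hpos
  · rw [HH_of_neg hneg, mul_zero, sum_eq_zero]
    intro k _
    rw [HH_of_neg (by omega), mul_zero]
  lift m to ℕ using hpos
  have hshift : ∑ k ∈ range m, X k * hp (m - 1 - k)
      = ∑ k ∈ Icc 1 m, powerSum k * HH ((m : ℤ) - k) := by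
    rw [← Ico_add_one_right_eq_Icc, sum_Ico_eq_sum_range, Nat.add_sub_cancel]
    refine sum_congr rfl fun k hk => ?_
    rw [mem_range] at hk
    rw [powerSum, Nat.add_sub_cancel_left, ← HH_natCast]
    congr 2
    omega
  rw [HH_natCast, Int.cast_natCast, natCast_mul_hp, hshift]
  refine sum_subset (Icc_subset_Icc_right (by omega)) fun k hk hk' => ?_
  simp only [mem_Icc] at hk hk'
  rw [HH_of_neg (by omega), mul_zero]

lemma powerSumPerp_HH {k : ℕ} (hk : 1 ≤ k) (m : ℤ) : powerSumPerp k (HH m) = HH (m - k) := by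
  rcases lt_or_ge m 0 with hneg | hpos
  · rw [HH_of_neg hneg, HH_of_neg (by omega), map_zero]
  lift m to ℕ using hpos
  induction m using Nat.strong_induction_on with
  | _ m ih =>
  rcases m.eq_zero_or_pos with rfl | hm
  · rw [Nat.cast_zero, HH_zero, Derivation.map_one_eq_zero, HH_of_neg (by omega)]
  have hm0 : (m : Λ) ≠ 0 := by exact_mod_cast hm.ne'
  have perp_smaller : ∀ i ∈ Icc 1 (m + k),
      powerSumPerp k (HH ((m : ℤ) - i)) = HH ((m : ℤ) - k - i) := by
    intro i hi
    rw [mem_Icc] at hi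
    rcases le_or_gt i m with him | him
    · rw [← Nat.cast_sub him, ih _ (by omega), Nat.cast_sub him, sub_right_comm]
    · rw [HH_of_neg (by omega), HH_of_neg (by omega), map_zero]
  have newton := intCast_mul_HH (m := m) (N := m + k) (by omega)
  have newton' := intCast_mul_HH (m := (m : ℤ) - k) (N := m + k) (by omega)
  refine mul_left_cancel₀ hm0 ?_
  calc (m : Λ) * powerSumPerp k (HH m)
      = powerSumPerp k ((m : Λ) * HH m) := by simp
    _ = ∑ i ∈ Icc 1 (m + k), (powerSum i * HH ((m : ℤ) - k - i)
          + if k = i then k • HH ((m : ℤ) - i) else 0) := by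
        rw [← Int.cast_natCast m, newton, map_sum]
        refine sum_congr rfl fun i hi => ?_
        rw [powerSumPerp_powerSum_mul (mem_Icc.1 hi).1, perp_smaller i hi]
    _ = (((m : ℤ) - k : ℤ) : Λ) * HH (m - k) + k * HH (m - k) := by
        rw [sum_add_distrib, newton', sum_ite_eq_of_mem _ _ _ (mem_Icc.2 ⟨hk, by omega⟩),
          nsmul_eq_mul]
    _ = m * HH (m - k) := by
        push_cast
        ring

end CompleteHomogeneous

section Bernstein

/-- The translation `p_k ↦ p_k - t ^ k`, that is, `∑ⱼ (-t) ^ j e_j^⊥`. -/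
noncomputable def powerSumShift : Λ →ₐ[ℚ] Polynomial Λ :=
  aeval fun k => Polynomial.C (X k) - Polynomial.X ^ (k + 1)

/-- The `Λ`-linear map `Λ[t] → Λ` with `t ^ j ↦ h_{n+j}`. -/
noncomputable def evalComplete (n : ℤ) : Polynomial Λ →ₗ[Λ] Λ :=
  Polynomial.lsum fun j => LinearMap.toSpanSingleton Λ Λ (HH (n + j))

/-- Bernstein's creation operator `B_n = ∑ⱼ (-1) ^ j h_{n+j} e_j^⊥`. It prepends the row `n` to a
Schur function. -/
noncomputable def bernsteinOp (n : ℤ) : Λ →ₗ[ℚ] Λ :=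
  (evalComplete n).restrictScalars ℚ ∘ₗ powerSumShift.toLinearMap

lemma bernsteinOp_apply (n : ℤ) (f : Λ) :
    bernsteinOp n f = evalComplete n (powerSumShift f) := rfl

lemma evalComplete_C_mul_X_pow (n : ℤ) (a : Λ) (j : ℕ) :
    evalComplete n (Polynomial.C a * Polynomial.X ^ j) = a * HH (n + j) := by
  rw [Polynomial.C_mul_X_pow_eq_monomial]
  simp [evalComplete, Polynomial.lsum, Polynomial.sum_monomial_index]

lemma evalComplete_X_pow_mul (n : ℤ) (k : ℕ) (F : Polynomial Λ) :
    evalComplete n (Polynomial.X ^ k * F) = evalComplete (n + k) F := by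
  induction F using Polynomial.induction_on' with
  | add F G hF hG => rw [mul_add, map_add, map_add, hF, hG]
  | monomial j a =>
    rw [← Polynomial.C_mul_X_pow_eq_monomial, mul_left_comm, ← pow_add,
      evalComplete_C_mul_X_pow, evalComplete_C_mul_X_pow]
    push_cast
    rw [add_assoc]

lemma powerSumShift_powerSum {k : ℕ} (hk : 1 ≤ k) :
    powerSumShift (powerSum k) = Polynomial.C (powerSum k) - Polynomial.X ^ k := by
  rw [powerSumShift, powerSum, aeval_X, Nat.sub_add_cancel hk]

lemma bernsteinOp_C (n : ℤ) (a : ℚ) : bernsteinOp n (C a) = C a * HH n := by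
  have h1 : bernsteinOp n 1 = HH n := by
    simpa [bernsteinOp_apply] using evalComplete_C_mul_X_pow n 1 0
  rw [← h1, ← smul_eq_C_mul, ← map_smul, smul_eq_C_mul, mul_one]

lemma bernsteinOp_powerSum_mul {k : ℕ} (hk : 1 ≤ k) (n : ℤ) (f : Λ) :
    bernsteinOp n (powerSum k * f) = powerSum k * bernsteinOp n f - bernsteinOp (n + k) f := by
  rw [bernsteinOp_apply, map_mul, powerSumShift_powerSum hk, sub_mul, map_sub,
    evalComplete_X_pow_mul, ← Polynomial.smul_eq_C_mul, map_smul, smul_eq_mul]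
  rfl

lemma powerSumPerp_bernsteinOp {k : ℕ} (hk : 1 ≤ k) (n : ℤ) (f : Λ) :
    powerSumPerp k (bernsteinOp n f)
      = bernsteinOp n (powerSumPerp k f) + bernsteinOp (n - k) f := by
  induction f using induction_on_powerSum generalizing n with
  | C a =>
    simp_rw [bernsteinOp_C, Derivation.leibniz, powerSumPerp_C, powerSumPerp_HH hk]
    simp
  | add f g hf hg =>
    simp_rw [map_add, hf, hg]
    ring
  | powerSum_mul i hi f hf =>
    rw [bernsteinOp_powerSum_mul hi, map_sub, powerSumPerp_powerSum_mul hi,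
      powerSumPerp_powerSum_mul hi, map_add, bernsteinOp_powerSum_mul hi,
      bernsteinOp_powerSum_mul hi, hf, hf, add_sub_right_comm n, apply_ite (bernsteinOp n),
      map_nsmul, map_zero]
    ring

lemma eventually_intCast_mul_bernsteinOp (n : ℤ) (f : Λ) :
    ∀ᶠ N in atTop, (n : Λ) * bernsteinOp n f = ∑ k ∈ Icc 1 N,
      (powerSum k * bernsteinOp (n - k) f + bernsteinOp (n + k) (powerSumPerp k f)) := by
  induction f using induction_on_powerSum generalizing n with
  | C a =>
    filter_upwards [eventually_ge_atTop n.toNat] with N hN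
    simp_rw [powerSumPerp_C, map_zero, add_zero, bernsteinOp_C, mul_left_comm _ (C a), ← mul_sum]
    rw [intCast_mul_HH (Int.toNat_le.1 hN)]
  | add f g hf hg =>
    filter_upwards [hf n, hg n] with N hfN hgN
    simp_rw [map_add, mul_add, hfN, hgN, ← sum_add_distrib]
    exact sum_congr rfl fun k _ => by ring
  | powerSum_mul i hi f hf =>
    filter_upwards [hf n, hf (n + i), eventually_ge_atTop i] with N hn hni hN
    have hi_mem : i ∈ Icc 1 N := mem_Icc.2 ⟨hi, hN⟩
    have perp_term : ∑ k ∈ Icc 1 N, bernsteinOp (n + k) (if k = i then k • f else 0)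
        = i * bernsteinOp (n + i) f := by
      simp_rw [apply_ite (bernsteinOp _), map_nsmul, map_zero, nsmul_eq_mul]
      exact sum_ite_eq_of_mem' _ _ _ hi_mem
    calc (n : Λ) * bernsteinOp n (powerSum i * f)
        = powerSum i * (n * bernsteinOp n f) - ((n + i : ℤ) : Λ) * bernsteinOp (n + i) f
          + i * bernsteinOp (n + i) f := by
          rw [bernsteinOp_powerSum_mul hi]
          push_cast
          ring
      _ = _ := by
          rw [hn, hni, ← perp_term, mul_sum, ← sum_sub_distrib, ← sum_add_distrib]
          refine sum_congr rfl fun k _ => ?_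
          rw [powerSumPerp_powerSum_mul hi, map_add, bernsteinOp_powerSum_mul hi,
            bernsteinOp_powerSum_mul hi, add_sub_right_comm n, add_right_comm n]
          ring

lemma bernsteinOp_intCast_mul (n a : ℤ) (f : Λ) :
    bernsteinOp n ((a : Λ) * f) = a * bernsteinOp n f := by
  rw [← zsmul_eq_mul, map_zsmul, zsmul_eq_mul]

end Bernstein

section Degree

/-- `f` is homogeneous of degree `d` for the grading of `Λ` with `deg p_k = k`. Degrees are
integers, so that operators may lower them below `0`. -/
abbrev HasDegree (f : Λ) (d : ℤ) : Prop := IsWeightedHomogeneous (fun k : ℕ => (k : ℤ) + 1) f d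

variable {f : Λ} {d : ℤ}

lemma HasDegree.eq_zero_of_neg (hf : HasDegree f d) (hd : d < 0) : f = 0 := by
  refine hf.eq_zero_of_no_monomials fun s hs => ?_
  have hnonneg : 0 ≤ Finsupp.weight (fun k : ℕ => (k : ℤ) + 1) s :=
    Finsupp.sum_nonneg fun k _ => nsmul_nonneg (by positivity) _
  omega

lemma hasDegree_powerSum {k : ℕ} (hk : 1 ≤ k) : HasDegree (powerSum k) k := by
  obtain ⟨k, rfl⟩ := Nat.exists_eq_add_of_le' hk
  exact_mod_cast isWeightedHomogeneous_X ℚ (fun k : ℕ => (k : ℤ) + 1) k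

lemma HasDegree.map_powerSumPerp (hf : HasDegree f d) (k : ℕ) :
    HasDegree (powerSumPerp k f) (d - k) := by
  rw [powerSumPerp_apply, smul_eq_C_mul]
  rcases k.eq_zero_or_pos with rfl | hk
  · rw [Nat.cast_zero, C_0, zero_mul]
    exact isWeightedHomogeneous_zero _ _ _
  exact (IsWeightedHomogeneous.pderiv hf (by push_cast [hk]; ring)).C_mul _

lemma hasDegree_HH (m : ℤ) : HasDegree (HH m) m := by
  rcases lt_or_ge m 0 with hneg | hpos
  · rw [HH_of_neg hneg]
    exact isWeightedHomogeneous_zero _ _ _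
  lift m to ℕ using hpos
  rw [HH_natCast]
  induction m using Nat.strong_induction_on with
  | _ m ih =>
  rcases m with _ | n
  · rw [hp]
    exact isWeightedHomogeneous_one _ _
  · rw [hp, smul_eq_C_mul]
    refine IsWeightedHomogeneous.C_mul (.sum _ _ _ fun k hk => ?_) _
    rw [mem_range] at hk
    convert (isWeightedHomogeneous_X ℚ _ k).mul (ih (n - k) (by omega)) using 1
    push_cast [Nat.le_of_lt_succ hk]
    ring

lemma exists_hasDegree_bernsteinOp_monomial (s : ℕ →₀ ℕ) (a : ℚ) :
    ∃ e, HasDegree (monomial s a) e ∧ ∀ n, HasDegree (bernsteinOp n (monomial s a)) (n + e) := by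
  refine induction_on_monomial
    (motive := fun f => ∃ e, HasDegree f e ∧ ∀ n, HasDegree (bernsteinOp n f) (n + e))
    (fun a => ⟨0, isWeightedHomogeneous_C _ a, fun n => ?_⟩) (fun g k hg => ?_) s a
  · rw [bernsteinOp_C, add_zero]
    exact (hasDegree_HH n).C_mul a
  · obtain ⟨e, hge, hBg⟩ := hg
    have hX : HasDegree (powerSum (k + 1)) (k + 1 : ℕ) := hasDegree_powerSum k.succ_pos
    rw [mul_comm, show X k = powerSum (k + 1) from rfl]
    refine ⟨(k + 1 : ℕ) + e, hX.mul hge, fun n => ?_⟩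
    rw [bernsteinOp_powerSum_mul k.succ_pos]
    refine .sub ?_ ?_
    · rw [add_left_comm]
      exact hX.mul (hBg n)
    · rw [← add_assoc]
      exact hBg _

lemma HasDegree.map_bernsteinOp (hf : HasDegree f d) (n : ℤ) :
    HasDegree (bernsteinOp n f) (n + d) := by
  induction hf using IsWeightedHomogeneous.induction_on with
  | zero =>
    rw [map_zero]
    exact isWeightedHomogeneous_zero _ _ _
  | add f g _ _ hf hg =>
    rw [map_add]
    exact hf.add hg
  | monomial s a hs =>
    by_cases ha : monomial s a = (0 : Λ)
    · rw [ha, map_zero]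
      exact isWeightedHomogeneous_zero _ _ _
    obtain ⟨e, hse, hB⟩ := exists_hasDegree_bernsteinOp_monomial s a
    rw [(isWeightedHomogeneous_monomial _ s a hs).inj_right ha hse]
    exact hB n

lemma HasDegree.powerSumPerp_eq_zero (hf : HasDegree f d) {k : ℕ} (hdk : d < k) :
    powerSumPerp k f = 0 :=
  (hf.map_powerSumPerp k).eq_zero_of_neg (by omega)

lemma HasDegree.bernsteinOp_eq_zero (hf : HasDegree f d) {n : ℤ} (hn : n + d < 0) :
    bernsteinOp n f = 0 :=
  (hf.map_bernsteinOp n).eq_zero_of_neg hn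

lemma HasDegree.intCast_mul_bernsteinOp (hf : HasDegree f d) {n : ℤ} {N : ℕ} (hd : d ≤ N)
    (hnd : n + d ≤ N) :
    (n : Λ) * bernsteinOp n f = ∑ k ∈ Icc 1 N,
      (powerSum k * bernsteinOp (n - k) f + bernsteinOp (n + k) (powerSumPerp k f)) := by
  obtain ⟨M, hM, hNM⟩ :=
    ((eventually_intCast_mul_bernsteinOp n f).and (eventually_ge_atTop N)).exists
  rw [hM]
  refine (sum_subset (Icc_subset_Icc_right hNM) fun k hk hk' => ?_).symm
  simp only [mem_Icc] at hk hk'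
  rw [hf.bernsteinOp_eq_zero (by omega), hf.powerSumPerp_eq_zero (by omega), map_zero,
    mul_zero, add_zero]

end Degree

section JacobiTrudi

lemma powerSumShift_HH (m : ℤ) :
    powerSumShift (HH m)
      = Polynomial.C (HH m) - Polynomial.X * Polynomial.C (HH (m - 1)) := by
  rcases lt_or_ge m 0 with hneg | hpos
  · simp [HH_of_neg hneg, HH_of_neg (show m - 1 < 0 by omega)]
  lift m to ℕ using hpos
  induction m using Nat.strong_induction_on with
  | _ m ih =>
  rcases m.eq_zero_or_pos with rfl | hm
  · simp [HH_zero, HH_of_neg]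
  have hm0 : (m : Polynomial Λ) ≠ 0 := by exact_mod_cast hm.ne'
  let u : ℕ → Polynomial Λ := fun k => Polynomial.X ^ k * Polynomial.C (HH ((m : ℤ) - k))
  have telescope : ∑ k ∈ Icc 1 m, (u k - u (k + 1)) = u 1 := by
    rw [sum_Icc_one_sub_succ, sub_eq_self]
    simp [u, HH_of_neg]
  have newton : Polynomial.C ((m : Λ) * HH m)
      = ∑ k ∈ Icc 1 m, Polynomial.C (powerSum k * HH ((m : ℤ) - k)) := by
    rw [← map_sum, ← intCast_mul_HH le_rfl, Int.cast_natCast]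
  have newton' : Polynomial.C (((m : Λ) - 1) * HH ((m : ℤ) - 1))
      = ∑ k ∈ Icc 1 m, Polynomial.C (powerSum k * HH ((m : ℤ) - 1 - k)) := by
    rw [← map_sum, ← intCast_mul_HH (by omega), Int.cast_sub, Int.cast_natCast, Int.cast_one]
  refine mul_left_cancel₀ hm0 ?_
  calc (m : Polynomial Λ) * powerSumShift (HH m)
      = powerSumShift ((m : Λ) * HH m) := by simp
    _ = ∑ k ∈ Icc 1 m, (Polynomial.C (powerSum k * HH ((m : ℤ) - k))
          - Polynomial.X * Polynomial.C (powerSum k * HH ((m : ℤ) - 1 - k))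
          - (u k - u (k + 1))) := by
        rw [← Int.cast_natCast (R := Λ) m, intCast_mul_HH le_rfl, map_sum]
        refine sum_congr rfl fun k hk => ?_
        rw [mem_Icc] at hk
        have hcast : (m : ℤ) - k = (m - k : ℕ) := by omega
        have ihk := ih (m - k) (by omega)
        rw [← hcast] at ihk
        rw [map_mul, powerSumShift_powerSum hk.1, ihk, map_mul, map_mul, sub_right_comm]
        simp only [u, Nat.cast_succ, sub_add_eq_sub_sub, pow_succ]
        rw [sub_right_comm _ (1 : ℤ)]
        ring
    _ = Polynomial.C ((m : Λ) * HH m)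
          - Polynomial.X * Polynomial.C (((m : Λ) - 1) * HH ((m : ℤ) - 1)) - u 1 := by
        rw [sum_sub_distrib, sum_sub_distrib, ← mul_sum, telescope, newton, newton']
    _ = (m : Polynomial Λ) * (Polynomial.C (HH m) - Polynomial.X * Polynomial.C (HH (m - 1))) := by
        simp [u]
        ring

/-- The Jacobi–Trudi determinant `det (h_{α_i + j})` with indices starting at `0`, which is
`s_μ` for `α_i = μ_i - i`. -/
noncomputable def jacobiTrudi {l : ℕ} (α : Fin l → ℤ) : Λ :=
  (Matrix.of fun i j : Fin l => HH (α i + j)).det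

lemma schur_eq_jacobiTrudi (l : ℕ) (μ : ℕ → ℕ) :
    schur l μ = jacobiTrudi fun i : Fin l => (μ i : ℤ) - i := by
  simp_rw [schur, jacobiTrudi, sub_add_eq_add_sub]

lemma powerSumShift_jacobiTrudi {l : ℕ} (α : Fin l → ℤ) :
    powerSumShift (jacobiTrudi α)
      = (Matrix.of (Fin.cons (fun j : Fin (l + 1) => Polynomial.X ^ (j : ℕ))
          fun i j => Polynomial.C (HH (α i - 1 + (j : ℕ))))).det := by
  let A : Matrix (Fin (l + 1)) (Fin (l + 1)) (Polynomial Λ) :=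
    Matrix.of (Fin.cons (Pi.single 0 1) fun i =>
      Fin.cons (Polynomial.C (HH (α i - 1))) fun j => powerSumShift (HH (α i + (j : ℕ))))
  have det_A : A.det = powerSumShift (jacobiTrudi α) := by
    have minor : A.submatrix Fin.succ (Fin.succAbove 0)
        = powerSumShift.mapMatrix (Matrix.of fun i j => HH (α i + (j : ℕ))) := rfl
    rw [jacobiTrudi, AlgHom.map_det, Matrix.det_succ_row_zero, Fin.sum_univ_succ,
      Finset.sum_eq_zero (fun j _ => by simp [A]), minor]
    simp [A]
  rw [← det_A]
  symm
  refine Matrix.det_eq_of_forall_col_eq_smul_add_pred (fun _ => Polynomial.X)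
    (fun i => ?_) fun i j => ?_
  · cases i using Fin.cases <;> simp [A]
  · cases i using Fin.cases with
    | zero => simp [A, pow_succ']
    | succ i => simp [A, powerSumShift_HH, sub_add_eq_add_sub, add_sub_assoc]

lemma bernsteinOp_jacobiTrudi {l : ℕ} (α : Fin l → ℤ) (n : ℤ) :
    bernsteinOp n (jacobiTrudi α) = jacobiTrudi (Fin.cons n fun i => α i - 1) := by
  rw [bernsteinOp_apply, powerSumShift_jacobiTrudi, jacobiTrudi, Matrix.det_succ_row_zero,
    Matrix.det_succ_row_zero, map_sum]
  refine sum_congr rfl fun j _ => ?_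
  let M : Matrix (Fin l) (Fin l) Λ := Matrix.of fun i k => HH (α i - 1 + (j.succAbove k : ℕ))
  have minor : Matrix.det ((Matrix.of (Fin.cons (fun j : Fin (l + 1) => Polynomial.X ^ (j : ℕ))
      fun i j => Polynomial.C (HH (α i - 1 + (j : ℕ))))).submatrix Fin.succ j.succAbove)
      = Polynomial.C M.det := by
    rw [RingHom.map_det]
    rfl
  have term : (-1) ^ (j : ℕ) * Polynomial.X ^ (j : ℕ) * Polynomial.C M.det
      = Polynomial.C ((-1) ^ (j : ℕ) * M.det) * Polynomial.X ^ (j : ℕ) := by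
    simp only [map_mul, map_pow, map_neg, map_one]
    ring
  rw [minor, Matrix.of_apply, Fin.cons_zero, term, evalComplete_C_mul_X_pow, mul_right_comm]
  rfl

lemma bernsteinOp_schur (l : ℕ) (μ : ℕ → ℕ) :
    bernsteinOp (μ 0) (schur l fun i => μ (i + 1)) = schur (l + 1) μ := by
  rw [schur_eq_jacobiTrudi, schur_eq_jacobiTrudi, bernsteinOp_jacobiTrudi]
  congr 1
  ext i
  cases i using Fin.cases <;> simp [sub_sub]

end JacobiTrudi

section CutJoin

/-- The Euler operator `∑ p_k p_k^⊥`, truncated to `k ≤ N`. -/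
noncomputable def euler (N : ℕ) (f : Λ) : Λ := ∑ k ∈ Icc 1 N, powerSum k * powerSumPerp k f

lemma two_mul_cutJoin (N : ℕ) (f : Λ) :
    2 * cutJoin N f = ∑ i ∈ Icc 1 N, ∑ j ∈ Icc 1 N,
      (powerSum (i + j) * powerSumPerp j (powerSumPerp i f)
        + powerSum i * powerSum j * powerSumPerp (i + j) f) := by
  rw [cutJoin, two_mul, ← two_smul ℚ, smul_inv_smul₀ two_ne_zero, sum_comm]
  refine sum_congr rfl fun i _ => sum_congr rfl fun j _ => ?_
  simp only [powerSum, powerSumPerp_apply, Derivation.map_smul, smul_smul, mul_smul_comm,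
    Nat.cast_mul, add_comm j i, mul_comm (X (j - 1) : Λ), mul_comm (j : ℚ)]

variable {f : Λ} {d n : ℤ} {N : ℕ}

lemma HasDegree.euler_bernsteinOp (hf : HasDegree f d) (hd : d ≤ N) (hnd : n + d ≤ N) :
    euler N (bernsteinOp n f)
      = (n : Λ) * bernsteinOp n f + bernsteinOp n (euler N f) := by
  rw [hf.intCast_mul_bernsteinOp hd hnd, euler, euler, map_sum, ← sum_add_distrib]
  refine sum_congr rfl fun k hk => ?_
  have hk := (mem_Icc.1 hk).1
  rw [powerSumPerp_bernsteinOp hk, bernsteinOp_powerSum_mul hk]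
  ring

lemma cutJoin_summand_bernsteinOp {i j : ℕ} (hi : 1 ≤ i) (hj : 1 ≤ j) (n : ℤ) (f : Λ) :
    powerSum (i + j) * powerSumPerp j (powerSumPerp i (bernsteinOp n f))
        + powerSum i * powerSum j * powerSumPerp (i + j) (bernsteinOp n f)
      = bernsteinOp n (powerSum (i + j) * powerSumPerp j (powerSumPerp i f)
          + powerSum i * powerSum j * powerSumPerp (i + j) f)
        + (powerSum i * (powerSum j * bernsteinOp (n - i - j) f)
          + bernsteinOp (n + i + j) (powerSumPerp j (powerSumPerp i f)))
        + (powerSum (i + j) * bernsteinOp (n - (i + j : ℕ)) f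
          - bernsteinOp (n + (i + j : ℕ)) (powerSumPerp (i + j) f))
        + (powerSum (i + j) * bernsteinOp (n - i) (powerSumPerp j f)
          + powerSum i * bernsteinOp (n + j) (powerSumPerp (i + j) f))
        + (powerSum (j + i) * bernsteinOp (n - j) (powerSumPerp i f)
          + powerSum j * bernsteinOp (n + i) (powerSumPerp (j + i) f)) := by
  have hij : 1 ≤ i + j := by omega
  simp only [powerSumPerp_bernsteinOp, hi, hj, hij, map_add, bernsteinOp_powerSum_mul, mul_assoc,
    add_comm j i, sub_sub, add_assoc, Nat.cast_add]
  ring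

lemma HasDegree.intCast_sq_mul_bernsteinOp (hf : HasDegree f d) (hd : d ≤ N) (hnd : n + d ≤ N) :
    (n : Λ) ^ 2 * bernsteinOp n f
      = ∑ i ∈ Icc 1 N, ∑ j ∈ Icc 1 N,
          (powerSum i * (powerSum j * bernsteinOp (n - i - j) f)
            + bernsteinOp (n + i + j) (powerSumPerp j (powerSumPerp i f)))
        + 2 * ∑ i ∈ Icc 1 N, ∑ j ∈ Icc 1 N,
            powerSum i * bernsteinOp (n - i + j) (powerSumPerp j f)
        + ∑ k ∈ Icc 1 N, (k : Λ) * (powerSum k * bernsteinOp (n - k) f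
            - bernsteinOp (n + k) (powerSumPerp k f)) := by
  have lower : ∀ i : ℕ, (n : Λ) * bernsteinOp (n - i) f
      = ∑ j ∈ Icc 1 N, (powerSum j * bernsteinOp (n - i - j) f
          + bernsteinOp (n - i + j) (powerSumPerp j f))
        + i * bernsteinOp (n - i) f := by
    intro i
    rw [← hf.intCast_mul_bernsteinOp hd (by omega)]
    push_cast
    ring
  have raise : ∀ i : ℕ, (n : Λ) * bernsteinOp (n + i) (powerSumPerp i f)
      = ∑ j ∈ Icc 1 N,
          (powerSum j * bernsteinOp (n - j + i) (powerSumPerp i f)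
            + bernsteinOp (n + i + j) (powerSumPerp j (powerSumPerp i f)))
        - i * bernsteinOp (n + i) (powerSumPerp i f) := by
    intro i
    simp_rw [sub_add_eq_add_sub]
    rw [← (hf.map_powerSumPerp i).intCast_mul_bernsteinOp (by omega) (by omega)]
    push_cast
    ring
  have swap : ∑ i ∈ Icc 1 N, ∑ j ∈ Icc 1 N,
        powerSum j * bernsteinOp (n - j + i) (powerSumPerp i f)
      = ∑ i ∈ Icc 1 N, ∑ j ∈ Icc 1 N,
        powerSum i * bernsteinOp (n - i + j) (powerSumPerp j f) := sum_comm
  calc (n : Λ) ^ 2 * bernsteinOp n f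
      = ∑ i ∈ Icc 1 N, (powerSum i * (n * bernsteinOp (n - i) f)
          + n * bernsteinOp (n + i) (powerSumPerp i f)) := by
        rw [pow_two, mul_assoc, hf.intCast_mul_bernsteinOp hd hnd, mul_sum]
        exact sum_congr rfl fun i _ => by ring
    _ = _ := by
        rw [two_mul]
        nth_rw 1 [← swap]
        simp only [← sum_add_distrib]
        refine sum_congr rfl fun i _ => ?_
        rw [lower, raise, mul_add, mul_sum]
        simp only [mul_add, sum_add_distrib]
        ring

lemma HasDegree.sum_sum_powerSum_add_mul_bernsteinOp (hf : HasDegree f d) (hd : d ≤ N)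
    (hnd : n + d ≤ N) :
    ∑ i ∈ Icc 1 N, ∑ j ∈ Icc 1 N,
        (powerSum (i + j) * bernsteinOp (n - (i + j : ℕ)) f
          - bernsteinOp (n + (i + j : ℕ)) (powerSumPerp (i + j) f))
      = ∑ k ∈ Icc 1 N, ((k : Λ) - 1) * (powerSum k * bernsteinOp (n - k) f
          - bernsteinOp (n + k) (powerSumPerp k f)) := by
  rw [sum_sum_Icc_add (u := fun k => powerSum k * bernsteinOp (n - k) f
    - bernsteinOp (n + k) (powerSumPerp k f)) fun k hk => ?_]
  · refine sum_congr rfl fun k hk => ?_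
    rw [nsmul_eq_mul, Nat.cast_sub (mem_Icc.1 hk).1, Nat.cast_one]
  · rw [hf.bernsteinOp_eq_zero (by omega), hf.powerSumPerp_eq_zero (by omega), map_zero,
      mul_zero, sub_zero]

lemma HasDegree.sum_sum_powerSum_mul_bernsteinOp (hf : HasDegree f d) (hd : d ≤ N)
    (hnd : n + d ≤ N) :
    ∑ i ∈ Icc 1 N, ∑ j ∈ Icc 1 N,
        (powerSum (i + j) * bernsteinOp (n - i) (powerSumPerp j f)
          + powerSum i * bernsteinOp (n + j) (powerSumPerp (i + j) f))
        + ∑ k ∈ Icc 1 N, powerSum k * bernsteinOp n (powerSumPerp k f)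
      = ∑ i ∈ Icc 1 N, ∑ j ∈ Icc 1 N,
          powerSum i * bernsteinOp (n - i + j) (powerSumPerp j f) := by
  rw [← sum_sum_Icc_split_diag
    (g := fun a b => powerSum a * bernsteinOp (n - a + b) (powerSumPerp b f))
    (fun a b ha => ?_) fun a b hb => ?_]
  · have join : ∀ i j : ℕ, n - (i + j : ℕ) + j = n - i := fun i j => by push_cast; ring
    have cut : ∀ i j : ℕ, n - i + (i + j : ℕ) = n + j := fun i j => by push_cast; ring
    simp_rw [join, cut, sub_add_cancel]
  · rw [(hf.map_powerSumPerp b).bernsteinOp_eq_zero (by omega), mul_zero]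
  · rw [hf.powerSumPerp_eq_zero (by omega), map_zero, mul_zero]

lemma two_mul_cutJoin_bernsteinOp (N : ℕ) (n : ℤ) (f : Λ) :
    2 * cutJoin N (bernsteinOp n f)
      = 2 * bernsteinOp n (cutJoin N f)
        + ∑ i ∈ Icc 1 N, ∑ j ∈ Icc 1 N,
            (powerSum i * (powerSum j * bernsteinOp (n - i - j) f)
              + bernsteinOp (n + i + j) (powerSumPerp j (powerSumPerp i f)))
        + ∑ i ∈ Icc 1 N, ∑ j ∈ Icc 1 N,
            (powerSum (i + j) * bernsteinOp (n - (i + j : ℕ)) f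
              - bernsteinOp (n + (i + j : ℕ)) (powerSumPerp (i + j) f))
        + 2 * ∑ i ∈ Icc 1 N, ∑ j ∈ Icc 1 N,
            (powerSum (i + j) * bernsteinOp (n - i) (powerSumPerp j f)
              + powerSum i * bernsteinOp (n + j) (powerSumPerp (i + j) f)) := by
  have swap : ∑ i ∈ Icc 1 N, ∑ j ∈ Icc 1 N,
        (powerSum (j + i) * bernsteinOp (n - j) (powerSumPerp i f)
          + powerSum j * bernsteinOp (n + i) (powerSumPerp (j + i) f))
      = ∑ i ∈ Icc 1 N, ∑ j ∈ Icc 1 N,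
        (powerSum (i + j) * bernsteinOp (n - i) (powerSumPerp j f)
          + powerSum i * bernsteinOp (n + j) (powerSumPerp (i + j) f)) := sum_comm
  rw [two_mul (bernsteinOp n _), ← map_add, ← two_mul, two_mul_cutJoin, two_mul_cutJoin,
    map_sum, two_mul (∑ i ∈ Icc 1 N, _)]
  nth_rw 2 [← swap]
  simp_rw [map_sum, ← sum_add_distrib]
  refine sum_congr rfl fun i hi => sum_congr rfl fun j hj => ?_
  rw [cutJoin_summand_bernsteinOp (mem_Icc.1 hi).1 (mem_Icc.1 hj).1]
  ring

lemma HasDegree.two_mul_cutJoin_bernsteinOp (hf : HasDegree f d) (hd : d ≤ N)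
    (hnd : n + d ≤ N) :
    2 * cutJoin N (bernsteinOp n f)
      = 2 * bernsteinOp n (cutJoin N f) - 2 * bernsteinOp n (euler N f)
        + (n * (n - 1) : Λ) * bernsteinOp n f := by
  have expand := CutAndJoin.two_mul_cutJoin_bernsteinOp N n f
  have newton := hf.intCast_mul_bernsteinOp hd hnd
  have newton_sq := hf.intCast_sq_mul_bernsteinOp hd hnd
  have sum_shift := hf.sum_sum_powerSum_add_mul_bernsteinOp hd hnd
  have sum_mixed := hf.sum_sum_powerSum_mul_bernsteinOp hd hnd
  have bernsteinOp_euler : bernsteinOp n (euler N f)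
      = ∑ k ∈ Icc 1 N, powerSum k * bernsteinOp n (powerSumPerp k f)
        - ∑ k ∈ Icc 1 N, bernsteinOp (n + k) (powerSumPerp k f) := by
    rw [euler, map_sum, ← sum_sub_distrib]
    exact sum_congr rfl fun k hk => bernsteinOp_powerSum_mul (mem_Icc.1 hk).1 _ _
  simp only [sum_add_distrib, sub_mul, one_mul, sum_sub_distrib] at *
  linear_combination expand + newton - newton_sq + sum_shift + 2 * sum_mixed
    + 2 * bernsteinOp_euler

end CutJoin

section Eigenvalue

lemma hasDegree_schur (l : ℕ) (μ : ℕ → ℕ) :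
    HasDegree (schur l μ) (∑ i ∈ range l, μ i : ℕ) := by
  induction l generalizing μ with
  | zero => simpa [schur] using isWeightedHomogeneous_one ℚ (fun k : ℕ => (k : ℤ) + 1)
  | succ l ih =>
    rw [← bernsteinOp_schur, sum_range_succ', add_comm, Nat.cast_add]
    exact (ih _).map_bernsteinOp _

lemma euler_schur (l : ℕ) (μ : ℕ → ℕ) {N : ℕ} (hN : ∑ i ∈ range l, μ i ≤ N) :
    euler N (schur l μ) = ((∑ i ∈ range l, μ i : ℤ) : Λ) * schur l μ := by
  induction l generalizing μ with
  | zero => simp [schur, euler]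
  | succ l ih =>
    rw [sum_range_succ'] at hN
    rw [← bernsteinOp_schur, (hasDegree_schur l _).euler_bernsteinOp (by omega) (by omega),
      ih _ (by omega), bernsteinOp_intCast_mul, sum_range_succ']
    push_cast
    ring

/-- `κ_μ = ∑ μ_i (μ_i - 2 i + 1)`, with `i` counted from `1`. -/
def kappa (l : ℕ) (μ : ℕ → ℕ) : ℤ := ∑ i ∈ range l, (μ i : ℤ) * ((μ i : ℤ) - 2 * (i + 1) + 1)

lemma kappa_succ (l : ℕ) (μ : ℕ → ℕ) :
    kappa (l + 1) μ = kappa l (fun i => μ (i + 1)) - 2 * ∑ i ∈ range l, (μ (i + 1) : ℤ)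
      + μ 0 * (μ 0 - 1) := by
  rw [kappa, sum_range_succ', kappa]
  push_cast
  rw [mul_sum, ← sum_sub_distrib]
  congr 1
  · exact sum_congr rfl fun i _ => by ring
  · ring

lemma two_mul_cutJoin_schur (l : ℕ) (μ : ℕ → ℕ) {N : ℕ} (hN : ∑ i ∈ range l, μ i ≤ N) :
    2 * cutJoin N (schur l μ) = (kappa l μ : Λ) * schur l μ := by
  induction l generalizing μ with
  | zero => simp [schur, kappa, cutJoin]
  | succ l ih =>
    rw [sum_range_succ'] at hN
    have hcutJoin : 2 * bernsteinOp (μ 0) (cutJoin N (schur l fun i => μ (i + 1)))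
        = (kappa l (fun i => μ (i + 1)) : Λ) * schur (l + 1) μ := by
      rw [two_mul, ← map_add, ← two_mul, ih _ (by omega), bernsteinOp_intCast_mul,
        bernsteinOp_schur]
    have heuler : bernsteinOp (μ 0) (euler N (schur l fun i => μ (i + 1)))
        = ((∑ i ∈ range l, μ (i + 1) : ℤ) : Λ) * schur (l + 1) μ := by
      rw [euler_schur _ _ (by omega), bernsteinOp_intCast_mul, bernsteinOp_schur]
    rw [← bernsteinOp_schur,
      (hasDegree_schur l _).two_mul_cutJoin_bernsteinOp (by omega) (by omega), bernsteinOp_schur,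
      hcutJoin, heuler, kappa_succ]
    push_cast
    ring

end Eigenvalue

end CutAndJoin

theorem cut_and_join_schur_general (l : ℕ) (μ : ℕ → ℕ) (B : ℕ) (hB : ∑ i ∈ range l, μ i ≤ B) :
    cutJoin B (schur l μ)
      = ((((∑ i ∈ range l, (μ i : ℤ) * ((μ i : ℤ) - 2 * (i + 1) + 1)) : ℤ) : ℚ) / 2) •
          schur l μ := by
  refine mul_left_cancel₀ (two_ne_zero (α := MvPolynomial ℕ ℚ)) ?_
  rw [CutAndJoin.two_mul_cutJoin_schur l μ hB, ← zsmul_eq_mul, ← Int.cast_smul_eq_zsmul ℚ,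
    two_mul, ← add_smul, add_halves, CutAndJoin.kappa]

/-- Schur functions are eigenvectors of the cut-and-join operator:
`K s_μ = (κ_μ / 2) s_μ` with `κ_μ = Σᵢ μᵢ (μᵢ - 2 i + 1)`.  The truncation bound `B` is
any number at least `|μ|`, which makes the truncated operator agree with `K` on `s_μ`. -/
theorem cut_and_join_schur (l : ℕ) (μ : ℕ → ℕ)
    (hmono : ∀ i j, i ≤ j → μ j ≤ μ i)
    (hsupp : ∀ i, l ≤ i → μ i = 0)
    (B : ℕ) (hB : ∑ i ∈ range l, μ i ≤ B) :
    cutJoin B (schur l μ)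
      = ((((∑ i ∈ range l, (μ i : ℤ) * ((μ i : ℤ) - 2 * (i + 1) + 1)) : ℤ) : ℚ) / 2) •
          schur l μ :=
  cut_and_join_schur_general l μ B hB
end

section
/- If the power sums are specialized to p_n = (aⁿ - bⁿ)/(1 - qⁿ) for all n ≥ 1, then the Schur function evaluates to s_μ = q^{n(μ)} Π_{x∈μ} (a - b q^{c(x)})/(1 - q^{h(x)}), where c(x) is the content and h(x) the hook length of box x, and n(μ) = Σᵢ (i-1)μᵢ. -/
open Finset MvPolynomial

/-!
The series `F(z) = ∏ᵢ (1 - b qⁱ z) / (1 - a qⁱ z)` is the unique solution of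
`(1 - a z) F(z) = (1 - b z) F(q z)` with constant term `1`. Uniqueness shows both that `F` is the
generating series of the specialized `h_n`, because `z F'` and `P F`, with `P` the generating series
of the `p_n`, satisfy the same inhomogeneous equation, and that `(1 - (b / q) z) F(z)` is the series
belonging to `b / q`.

By the second fact, column operations replace `b` by `b / qʲ` in column `j` of the Jacobi–Trudi
determinant. The entry in row `i` and column `j` (from `0`) then has as numerator the product of
`a - b q^c` over `-j ≤ c < μᵢ - i`. For each permutation with a nonzero term these intervals cover
every `c` equally often, so the numerators factor out of the determinant as the product over all
contents. What remains is, up to row factors and triangular column operations, a Vandermonde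
determinant, and it turns into hook lengths because the hook lengths in row `i` and the numbers
`μᵢ - μᵣ + r - i` for `i < r < l` together exhaust `1, …, μᵢ + l - 1 - i`.
-/

open scoped PowerSeries

variable {R K : Type*}

section zeroExtend

variable [Zero R]

/-- The sequence `u` extended by `0` to negative indices, as the entries of a Jacobi–Trudi
determinant require. -/
def zeroExtend (u : ℕ → R) (k : ℤ) : R := if k < 0 then 0 else u k.toNat

@[simp]
lemma zeroExtend_natCast (u : ℕ → R) (n : ℕ) : zeroExtend u n = u n := by
  simp [zeroExtend]

lemma zeroExtend_of_neg {u : ℕ → R} {k : ℤ} (hk : k < 0) : zeroExtend u k = 0 := if_pos hk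

end zeroExtend

section Intervals

variable {M n ι : Type*} [CommMonoid M] [Fintype n] [LinearOrder ι] [LocallyFiniteOrder ι]

lemma sum_val_Ico_comp_perm {s t : n → ι} (hst : ∀ i, s i ≤ t i) (σ : Equiv.Perm n)
    (hσ : ∀ i, s (σ i) ≤ t i) :
    ∑ i, (Ico (s (σ i)) (t i)).val = ∑ i, (Ico (s i) (t i)).val := by
  ext c
  -- Both sides count `c` as often as `#{i | s i ≤ c} - #{i | t i ≤ c}`.
  have count_add {u : n → ι} (hu : ∀ i, u i ≤ t i) :
      (∑ i, (Ico (u i) (t i)).val).count c + ∑ i, (if t i ≤ c then 1 else 0) =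
        ∑ i, if u i ≤ c then 1 else 0 := by
    rw [Multiset.count_sum', ← sum_add_distrib]
    refine sum_congr rfl fun i _ => ?_
    rw [Multiset.count_eq_of_nodup (Ico _ _).nodup]
    have := hu i
    simp only [mem_val, mem_Ico]
    grind
  have hperm := Equiv.sum_comp σ fun i => if s i ≤ c then 1 else 0
  have h₁ := count_add hσ
  have h₂ := count_add hst
  omega

lemma prod_prod_Ico_comp_perm (f : ι → M) {s t : n → ι} (hst : ∀ i, s i ≤ t i)
    (σ : Equiv.Perm n) (hσ : ∀ i, s (σ i) ≤ t i) :
    ∏ i, ∏ c ∈ Ico (s (σ i)) (t i), f c = ∏ i, ∏ c ∈ Ico (s i) (t i), f c := by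
  have prod_eq (u : n → ι) : ∏ i, ∏ c ∈ Ico (u i) (t i), f c =
      ((∑ i, (Ico (u i) (t i)).val).map f).prod := by
    rw [← Multiset.coe_mapAddMonoidHom, map_sum, Multiset.prod_sum]
    rfl
  rw [prod_eq, prod_eq, sum_val_Ico_comp_perm hst σ hσ]

lemma prod_Ico_neg_eq_prod_range (f : ℤ → M) (i n : ℕ) :
    ∏ c ∈ Ico (-i : ℤ) (n - i), f c = ∏ k ∈ range n, f (k - i) := by
  refine (prod_nbij (fun k : ℕ => (k : ℤ) - i) ?_ ?_ ?_ fun _ _ => rfl).symm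
  · intro k hk
    simp only [mem_range, mem_Ico] at hk ⊢
    omega
  · intro k _ k' _ h
    simpa using h
  · intro c hc
    simp only [coe_Ico, Set.mem_Ico] at hc
    exact ⟨(c + i).toNat, by rw [mem_coe, mem_range]; omega, by dsimp only; omega⟩

end Intervals

section Determinants

variable [CommRing R]

/-- Column operations: in the `r`-th round, `c r` times the preceding column is subtracted, from
right to left, from each of the columns `r + 1, r + 2, …`. -/
lemma det_iterate_difference {l : ℕ} (h : ℕ → ℤ → R) (c : ℕ → R)
    (hstep : ∀ r k, h (r + 1) k = h r k - c r * h r (k - 1)) (m : Fin l → ℤ) :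
    Matrix.det (.of fun i j : Fin l => h j (m i + j)) =
      Matrix.det (.of fun i j : Fin l => h 0 (m i + j)) := by
  have round (r : ℕ) : Matrix.det (.of fun i j : Fin l => h (min j r) (m i + j)) =
      Matrix.det (.of fun i j : Fin l => h (min j (r + 1)) (m i + j)) := by
    cases l with
    | zero => simp
    | succ l =>
      refine Matrix.det_eq_of_forall_col_eq_smul_add_pred
        (fun j => if (j : ℕ) < r then 0 else c r) (by simp) fun i j => ?_
      have hpred : m i + ((j + 1 : ℕ) : ℤ) - 1 = m i + (j : ℕ) := by push_cast; ring
      rcases lt_or_ge (j : ℕ) r with hj | hj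
      · simp [hj, hj.le]
      · simp [hj.not_gt, hj, hj.trans (Nat.le_succ _), hstep, ← hpred]
  have rounds (r : ℕ) : Matrix.det (.of fun i j : Fin l => h (min j r) (m i + j)) =
      Matrix.det (.of fun i j : Fin l => h 0 (m i + j)) := by
    induction r with
    | zero => simp
    | succ r ih => rw [← round, ih]
  simpa [Fin.is_le'] using rounds l

lemma det_prod_Ico_mul {n ι : Type*} [Fintype n] [DecidableEq n] [LinearOrder ι]
    [LocallyFiniteOrder ι] (f : ι → R) {s t : n → ι} (hst : ∀ i, s i ≤ t i) (M : Matrix n n R)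
    (hM : ∀ i j, t i < s j → M i j = 0) :
    Matrix.det (.of fun i j => (∏ c ∈ Ico (s j) (t i), f c) * M i j) =
      (∏ i, ∏ c ∈ Ico (s i) (t i), f c) * M.det := by
  rw [← M.det_transpose, ← Matrix.det_transpose, Matrix.det_apply, Matrix.det_apply, mul_sum]
  refine sum_congr rfl fun σ _ => ?_
  simp only [Matrix.transpose_apply, Matrix.of_apply, prod_mul_distrib, mul_smul_comm]
  by_cases hσ : ∀ i, s (σ i) ≤ t i
  · rw [prod_prod_Ico_comp_perm f hst σ hσ]
  · obtain ⟨i, hi⟩ := not_forall.1 hσ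
    have hM₀ : ∏ i, M i (σ i) = 0 := prod_eq_zero (mem_univ i) (hM i (σ i) (not_le.1 hi))
    simp only [hM₀, mul_zero, smul_zero]

open scoped Polynomial in
lemma det_prod_one_sub_mul {l : ℕ} (A x : Fin l → R) :
    Matrix.det (.of fun i j => ∏ t ∈ Ioi j, (1 - A t * x i)) =
      ∏ i, ∏ j ∈ Ioi i, A j * (x j - x i) := by
  let p (j : Fin l) : R[X] := ∏ t ∈ Ioi j, (Polynomial.C (-A t) * Polynomial.X + 1)
  have degree_factor (t : Fin l) : (Polynomial.C (-A t) * Polynomial.X + 1).natDegree ≤ 1 := by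
    compute_degree
  have degree_p (j : Fin l) : (p j).natDegree ≤ (j.rev : ℕ) := by
    refine (Polynomial.natDegree_prod_le _ _).trans
      ((sum_le_card_nsmul _ _ 1 fun t _ => degree_factor t).trans ?_)
    simp [Fin.val_rev, Nat.sub_sub, add_comm]
  let L : Matrix (Fin l) (Fin l) R := .of fun k j => (p j).coeff k.rev
  have hL : L.IsLowerTriangular := fun k j hkj =>
    Polynomial.coeff_eq_zero_of_natDegree_lt ((degree_p j).trans_lt (Fin.rev_lt_rev.2 hkj))
  have leading (j : Fin l) : L j j = ∏ t ∈ Ioi j, -A t := by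
    have := Polynomial.coeff_prod_of_natDegree_le (s := Ioi j) _ 1 fun t _ => degree_factor t
    simpa [L, p, Fin.val_rev, Nat.sub_sub, add_comm, Polynomial.coeff_one] using this
  have factor : .of (fun i j => ∏ t ∈ Ioi j, (1 - A t * x i)) =
      Matrix.projVandermonde 1 x * L := by
    ext i j
    have := Polynomial.eval_eq_sum_range' ((degree_p j).trans_lt j.rev.isLt) (x i)
    rw [← Fin.sum_univ_eq_sum_range (fun k => (p j).coeff k * x i ^ k),
      ← Equiv.sum_comp Fin.revPerm] at this
    have eval_p : (p j).eval (x i) = ∏ t ∈ Ioi j, (1 - A t * x i) := by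
      simp [p, Polynomial.eval_prod, neg_add_eq_sub]
    rw [Matrix.of_apply, ← eval_p, this, Matrix.mul_apply]
    simp [L, Matrix.projVandermonde_apply, mul_comm]
  rw [factor, Matrix.det_mul, Matrix.det_projVandermonde, Matrix.det_of_isLowerTriangular _ hL]
  simp only [leading, ← prod_mul_distrib]
  refine prod_congr rfl fun i _ => prod_congr rfl fun j _ => ?_
  simp only [Pi.one_apply]
  ring

end Determinants

section qDifference

section CommRing

variable [CommRing R]

lemma constantCoeff_rescale (q : R) (F : R⟦X⟧) :
    PowerSeries.constantCoeff (PowerSeries.rescale q F) = PowerSeries.constantCoeff F := by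
  rw [← PowerSeries.coeff_zero_eq_constantCoeff_apply, PowerSeries.coeff_rescale, pow_zero,
    one_mul, PowerSeries.coeff_zero_eq_constantCoeff_apply]

lemma rescale_C (q c : R) : PowerSeries.rescale q (PowerSeries.C c) = PowerSeries.C c := by
  ext (_ | n) <;> simp [PowerSeries.coeff_rescale, PowerSeries.coeff_C]

/-- The `q`-difference equation `(1 - a z) F(z) = (1 - b z) F(q z)`, whose solution with constant
term `1` is `∏ᵢ (1 - b qⁱ z) / (1 - a qⁱ z)`. -/
def QDifferenceEq (a b q : R) (F : R⟦X⟧) : Prop :=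
  (1 - PowerSeries.C a * PowerSeries.X) * F =
    (1 - PowerSeries.C b * PowerSeries.X) * PowerSeries.rescale q F

lemma qDifferenceEq_iff {a b q : R} {F : R⟦X⟧} :
    QDifferenceEq a b q F ↔ ∀ n, (1 - q ^ (n + 1)) * PowerSeries.coeff (n + 1) F =
        (a - b * q ^ n) * PowerSeries.coeff n F := by
  have coeff_succ (c : R) (G : R⟦X⟧) (n : ℕ) :
      PowerSeries.coeff (n + 1) ((1 - PowerSeries.C c * PowerSeries.X) * G) =
        PowerSeries.coeff (n + 1) G - c * PowerSeries.coeff n G := by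
    rw [sub_mul, one_mul, mul_assoc, map_sub, PowerSeries.coeff_C_mul,
      PowerSeries.coeff_succ_X_mul]
  rw [QDifferenceEq, PowerSeries.ext_iff]
  constructor
  · intro h n
    have := h (n + 1)
    simp only [coeff_succ, PowerSeries.coeff_rescale] at this
    linear_combination this
  · rintro h (_ | n)
    · simp [constantCoeff_rescale]
    · simp only [coeff_succ, PowerSeries.coeff_rescale]
      linear_combination h n

lemma X_mul_derivative_rescale (q : R) (F : R⟦X⟧) :
    PowerSeries.X * PowerSeries.derivative R (PowerSeries.rescale q F) =
      PowerSeries.rescale q (PowerSeries.X * PowerSeries.derivative R F) := by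
  ext (_ | n)
  · simp
  · simp only [PowerSeries.coeff_succ_X_mul, PowerSeries.coeff_derivative,
      PowerSeries.coeff_rescale]
    ring

lemma mk_pow_mul_one_sub (c : R) :
    PowerSeries.mk (c ^ ·) * (1 - PowerSeries.C c * PowerSeries.X) = 1 := by
  simpa [PowerSeries.rescale_mk, PowerSeries.rescale_X] using
    congrArg (PowerSeries.rescale c) (PowerSeries.mk_one_mul_one_sub_eq_one R)

end CommRing

variable [Field K]

/-- The `q`-Pochhammer symbol `(q; q)_n`. -/
def qPochhammer (q : K) (n : ℕ) : K := ∏ k ∈ range n, (1 - q ^ (k + 1))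

/-- The value of the complete homogeneous symmetric function `h_n` under `powerSumSpec a b q`,
as given by the `q`-binomial theorem. -/
def completeSpec (a b q : K) (n : ℕ) : K :=
  (∏ k ∈ range n, (a - b * q ^ k)) / qPochhammer q n

variable {a b q : K}

@[simp]
lemma completeSpec_zero : completeSpec a b q 0 = 1 := by
  simp [completeSpec, qPochhammer]

lemma one_sub_pow_succ_ne_zero (hq : ¬ IsOfFinOrder q) (n : ℕ) : 1 - q ^ (n + 1) ≠ 0 :=
  fun h => hq (isOfFinOrder_iff_pow_eq_one.2 ⟨n + 1, n.succ_pos, (sub_eq_zero.1 h).symm⟩)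

lemma qPochhammer_ne_zero (hq : ¬ IsOfFinOrder q) (n : ℕ) : qPochhammer q n ≠ 0 :=
  prod_ne_zero_iff.2 fun k _ => one_sub_pow_succ_ne_zero hq k

lemma completeSpec_succ (hq : ¬ IsOfFinOrder q) (n : ℕ) :
    (1 - q ^ (n + 1)) * completeSpec a b q (n + 1) = (a - b * q ^ n) * completeSpec a b q n := by
  have := one_sub_pow_succ_ne_zero hq n
  rw [completeSpec, completeSpec, qPochhammer, prod_range_succ, prod_range_succ, ← qPochhammer]
  field_simp

lemma qDifferenceEq_mk_completeSpec (hq : ¬ IsOfFinOrder q) :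
    QDifferenceEq a b q (PowerSeries.mk (completeSpec a b q)) :=
  qDifferenceEq_iff.2 fun n => by simpa using completeSpec_succ hq n

lemma QDifferenceEq.coeff_eq (hq : ¬ IsOfFinOrder q) {F : K⟦X⟧} (hF : QDifferenceEq a b q F)
    (n : ℕ) :
    PowerSeries.coeff n F = PowerSeries.constantCoeff F * completeSpec a b q n := by
  induction n with
  | zero => simp
  | succ n ih =>
    refine mul_left_cancel₀ (one_sub_pow_succ_ne_zero hq n) ?_
    rw [qDifferenceEq_iff.1 hF, ih, mul_left_comm (1 - _), completeSpec_succ hq, mul_left_comm]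

/-- With `F = ∑ h_n zⁿ` and `P = ∑ p_n zⁿ`, the difference `z F' - P F` satisfies the same
`q`-difference equation as `F` and has constant term `0`, so it vanishes. -/
lemma X_mul_derivative_mk_completeSpec (hq : ¬ IsOfFinOrder q) :
    PowerSeries.X * PowerSeries.derivative K (PowerSeries.mk (completeSpec a b q)) =
      PowerSeries.mk (fun n => (a ^ n - b ^ n) / (1 - q ^ n)) *
        PowerSeries.mk (completeSpec a b q) := by
  set F := PowerSeries.mk (completeSpec a b q)
  set P := PowerSeries.mk fun n => (a ^ n - b ^ n) / (1 - q ^ n)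
  have hF : QDifferenceEq a b q F := qDifferenceEq_mk_completeSpec hq
  rw [QDifferenceEq] at hF
  have hP : P - PowerSeries.rescale q P =
      PowerSeries.mk (a ^ ·) - PowerSeries.mk (b ^ ·) := by
    ext (_ | n)
    · simp [P, constantCoeff_rescale]
    · have := one_sub_pow_succ_ne_zero hq n
      simp only [P, map_sub, PowerSeries.coeff_rescale, PowerSeries.coeff_mk]
      field_simp
  have hderiv := congrArg (PowerSeries.X * PowerSeries.derivative K ·) hF
  simp only [Derivation.leibniz, map_sub, Derivation.map_one_eq_zero, smul_eq_mul,
    PowerSeries.derivative_C, PowerSeries.derivative_X] at hderiv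
  have hU : QDifferenceEq a b q (PowerSeries.X * PowerSeries.derivative K F - P * F) := by
    rw [QDifferenceEq, map_sub, map_mul _ P, ← X_mul_derivative_rescale]
    linear_combination hderiv - F * (1 - PowerSeries.C a * PowerSeries.X) * hP
      - (1 + PowerSeries.rescale q P - PowerSeries.mk (b ^ ·)) * hF
      - F * mk_pow_mul_one_sub a + PowerSeries.rescale q F * mk_pow_mul_one_sub b
  refine sub_eq_zero.1 (PowerSeries.ext fun n => ?_)
  rw [hU.coeff_eq hq]
  simp [P]

lemma sum_powerSum_mul_completeSpec (hq : ¬ IsOfFinOrder q) (n : ℕ) :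
    ∑ k ∈ range (n + 1), (a ^ (k + 1) - b ^ (k + 1)) / (1 - q ^ (k + 1)) *
      completeSpec a b q (n - k) = (n + 1) * completeSpec a b q (n + 1) := by
  have h := congrArg (PowerSeries.coeff (n + 1)) (X_mul_derivative_mk_completeSpec (a := a)
    (b := b) hq)
  rw [PowerSeries.coeff_succ_X_mul, PowerSeries.coeff_derivative, PowerSeries.coeff_mul,
    Nat.sum_antidiagonal_eq_sum_range_succ_mk, sum_range_succ'] at h
  simpa [mul_comm] using h.symm

lemma completeSpec_div (hq₀ : q ≠ 0) (hq : ¬ IsOfFinOrder q) (n : ℕ) :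
    completeSpec a (b / q) q (n + 1) =
      completeSpec a b q (n + 1) - b / q * completeSpec a b q n := by
  set G := (1 - PowerSeries.C (b / q) * PowerSeries.X) * PowerSeries.mk (completeSpec a b q)
  have hC : PowerSeries.C b = PowerSeries.C (b / q) * PowerSeries.C q := by
    rw [← map_mul, div_mul_cancel₀ b hq₀]
  have hF := qDifferenceEq_mk_completeSpec (a := a) (b := b) hq
  have hG : QDifferenceEq a (b / q) q G := by
    rw [QDifferenceEq] at hF ⊢
    simp only [G, map_mul, map_sub, map_one, rescale_C, PowerSeries.rescale_X]
    linear_combination (1 - PowerSeries.C (b / q) * PowerSeries.X) * hF -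
      (1 - PowerSeries.C (b / q) * PowerSeries.X) * PowerSeries.X *
        PowerSeries.rescale q (PowerSeries.mk (completeSpec a b q)) * hC
  have := hG.coeff_eq hq (n + 1)
  simpa [G, sub_mul, mul_assoc, PowerSeries.coeff_succ_X_mul] using this.symm

lemma zeroExtend_completeSpec_div (hq₀ : q ≠ 0) (hq : ¬ IsOfFinOrder q) (k : ℤ) :
    zeroExtend (completeSpec a (b / q) q) k =
      zeroExtend (completeSpec a b q) k - b / q * zeroExtend (completeSpec a b q) (k - 1) := by
  rcases lt_trichotomy k 0 with hk | rfl | hk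
  · simp [zeroExtend_of_neg, hk, show k - 1 < 0 by omega]
  · simp [zeroExtend]
  · obtain ⟨n, rfl⟩ : ∃ n : ℕ, k = (n + 1 : ℕ) := ⟨(k - 1).toNat, by omega⟩
    rw [show ((n + 1 : ℕ) : ℤ) - 1 = n by simp]
    simp only [zeroExtend_natCast, completeSpec_div hq₀ hq]

end qDifference

section JacobiTrudi

variable [Field K] {a b q : K}

section powerSumSpec

variable [Algebra ℚ K]

/-- The specialization `p_n ↦ (aⁿ - bⁿ) / (1 - qⁿ)` of the ring of symmetric functions. -/
noncomputable def powerSumSpec (a b q : K) : MvPolynomial ℕ ℚ →ₐ[ℚ] K :=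
  aeval fun k => (a ^ (k + 1) - b ^ (k + 1)) / (1 - q ^ (k + 1))

lemma powerSumSpec_hp (hq : ¬ IsOfFinOrder q) (n : ℕ) :
    powerSumSpec a b q (hp n) = completeSpec a b q n := by
  have : CharZero K := algebraRat.charZero K
  induction n using Nat.strong_induction_on with
  | _ n ih =>
    rcases n with _ | n
    · simp [hp]
    · have newton : ∑ k ∈ range (n + 1), powerSumSpec a b q (X k * hp (n - k)) =
          (n + 1) * completeSpec a b q (n + 1) := by
        rw [← sum_powerSum_mul_completeSpec hq]
        refine sum_congr rfl fun k _ => ?_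
        rw [map_mul, ih _ (by omega), powerSumSpec, aeval_X]
      rw [hp, map_smul, map_sum, newton, Algebra.smul_def, map_inv₀, map_add, map_natCast,
        map_one, inv_mul_cancel_left₀ n.cast_add_one_ne_zero]

lemma powerSumSpec_schur (hq : ¬ IsOfFinOrder q) (l : ℕ) (μ : ℕ → ℕ) :
    powerSumSpec a b q (schur l μ) =
      Matrix.det (.of fun i j : Fin l => zeroExtend (completeSpec a b q) (μ i - i + j)) := by
  rw [schur, AlgHom.map_det]
  congr 1
  ext i j
  simp only [AlgHom.mapMatrix_apply, Matrix.map_apply, Matrix.of_apply, HH, zeroExtend,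
    sub_add_eq_add_sub, apply_ite (powerSumSpec a b q), map_zero, powerSumSpec_hp hq]

end powerSumSpec

lemma zeroExtend_completeSpec_div_pow (hq₀ : q ≠ 0) (m : ℤ) (j : ℕ) :
    zeroExtend (completeSpec a (b / q ^ j) q) (m + j) =
      (∏ c ∈ Ico (-j : ℤ) m, (a - b * q ^ c)) *
        zeroExtend (fun n => (qPochhammer q n)⁻¹) (m + j) := by
  rcases lt_or_ge (m + j) 0 with hm | hm
  · rw [zeroExtend_of_neg hm, zeroExtend_of_neg hm, mul_zero]
  · obtain ⟨n, hn⟩ := Int.eq_ofNat_of_zero_le hm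
    obtain rfl : m = n - j := by omega
    simp only [hn, zeroExtend_natCast, prod_Ico_neg_eq_prod_range, completeSpec, div_eq_mul_inv]
    congr 1
    refine prod_congr rfl fun k _ => ?_
    rw [zpow_sub₀ hq₀, zpow_natCast, zpow_natCast]
    ring

lemma det_completeSpec (hq₀ : q ≠ 0) (hq : ¬ IsOfFinOrder q) {l : ℕ} {m : Fin l → ℤ}
    (hm : ∀ i : Fin l, -(i : ℤ) ≤ m i) :
    Matrix.det (.of fun i j : Fin l => zeroExtend (completeSpec a b q) (m i + j)) =
      (∏ i : Fin l, ∏ c ∈ Ico (-(i : ℤ)) (m i), (a - b * q ^ c)) *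
        Matrix.det (.of fun i j : Fin l =>
          zeroExtend (fun n => (qPochhammer q n)⁻¹) (m i + j)) := by
  have shift := det_iterate_difference (fun r => zeroExtend (completeSpec a (b / q ^ r) q))
    (fun r => b / q ^ (r + 1))
    (fun r k => by rw [pow_succ, ← div_div, zeroExtend_completeSpec_div hq₀ hq]) m
  simp only [pow_zero, div_one] at shift
  rw [← shift, ← det_prod_Ico_mul _ hm]
  · simp only [zeroExtend_completeSpec_div_pow hq₀, Matrix.of_apply]
  · intro i j hij
    rw [Matrix.of_apply, zeroExtend_of_neg (by omega)]

lemma zeroExtend_inv_qPochhammer_sub_one (hq : ¬ IsOfFinOrder q) (k : ℤ) :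
    zeroExtend (fun n => (qPochhammer q n)⁻¹) (k - 1) =
      (1 - q ^ k) * zeroExtend (fun n => (qPochhammer q n)⁻¹) k := by
  rcases lt_trichotomy k 0 with hk | rfl | hk
  · simp [zeroExtend_of_neg, hk, show k - 1 < 0 by omega]
  · simp [zeroExtend]
  · obtain ⟨n, rfl⟩ : ∃ n : ℕ, k = (n + 1 : ℕ) := ⟨(k - 1).toNat, by omega⟩
    have := one_sub_pow_succ_ne_zero hq n
    rw [show ((n + 1 : ℕ) : ℤ) - 1 = n by simp, zeroExtend_natCast, zeroExtend_natCast,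
      zpow_natCast, qPochhammer, qPochhammer, prod_range_succ]
    field_simp

lemma zeroExtend_inv_qPochhammer_eq_prod_mul (hq : ¬ IsOfFinOrder q) (m : ℤ) {j l : ℕ}
    (hjl : j < l) :
    zeroExtend (fun n => (qPochhammer q n)⁻¹) (m + j) =
      (∏ r ∈ Ico (j + 1) l, (1 - q ^ (m + r))) *
        zeroExtend (fun n => (qPochhammer q n)⁻¹) (m + l - 1) := by
  induction l, hjl using Nat.le_induction with
  | base => simp [← add_assoc]
  | succ l hjl ih =>
    rw [ih, zeroExtend_inv_qPochhammer_sub_one hq, ← mul_assoc, prod_Ico_succ_top hjl]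
    simp [← add_assoc]

lemma det_inv_qPochhammer (hq₀ : q ≠ 0) (hq : ¬ IsOfFinOrder q) {l : ℕ} (m : Fin l → ℤ) :
    Matrix.det (.of fun i j : Fin l => zeroExtend (fun n => (qPochhammer q n)⁻¹) (m i + j)) =
      ∏ i : Fin l, (∏ r ∈ Ioi i, q ^ (r : ℕ) * (q ^ m r - q ^ m i)) *
        zeroExtend (fun n => (qPochhammer q n)⁻¹) (m i + l - 1) := by
  have entry (i j : Fin l) : zeroExtend (fun n => (qPochhammer q n)⁻¹) (m i + j) =
      zeroExtend (fun n => (qPochhammer q n)⁻¹) (m i + l - 1) *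
        ∏ r ∈ Ioi j, (1 - q ^ (r : ℕ) * q ^ m i) := by
    rw [zeroExtend_inv_qPochhammer_eq_prod_mul hq _ j.isLt, mul_comm, Ico_add_one_left_eq_Ioo,
      ← Fin.map_valEmbedding_Ioi, prod_map]
    simp only [Fin.valEmbedding_apply, zpow_add₀ hq₀, zpow_natCast, mul_comm]
  have pull_rows := Matrix.det_mul_column
    (fun i : Fin l => zeroExtend (fun n => (qPochhammer q n)⁻¹) (m i + l - 1))
    (.of fun i j : Fin l => ∏ r ∈ Ioi j, (1 - q ^ (r : ℕ) * q ^ m i))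
  simp only [entry, Matrix.of_apply] at pull_rows ⊢
  rw [pull_rows, det_prod_one_sub_mul (fun r : Fin l => q ^ (r : ℕ)) (fun i => q ^ m i),
    prod_mul_distrib, mul_comm]

end JacobiTrudi

section HookLength

/-- The hook length `h(x)` of the box `x` of `μ` in row `i` and column `j`, both counted from `0`.
The leg is read off the column length `#{r < l | j + 1 ≤ μ r}`; outside the diagram of `μ` the
truncated subtraction makes the value meaningless. -/
def hookLength (l : ℕ) (μ : ℕ → ℕ) (i j : ℕ) : ℕ :=
  μ i + #{r ∈ range l | j + 1 ≤ μ r} - (i + j + 1)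

variable {l : ℕ} {μ : ℕ → ℕ}

lemma hookLength_of_mem_Ico (hμ : Antitone μ) {r : ℕ} (hr : r < l) (i : ℕ) {j : ℕ}
    (hj : j ∈ Ico (μ (r + 1)) (μ r)) : hookLength l μ i j = μ i + r - (i + j) := by
  rw [mem_Ico] at hj
  have column : {s ∈ range l | j + 1 ≤ μ s} = range (r + 1) := by
    ext s
    simp only [mem_filter, mem_range]
    refine ⟨fun hs => ?_, fun hs => ⟨by omega, hj.2.trans_le (hμ (by omega))⟩⟩
    by_contra hrs
    have := hμ (not_lt.1 hrs)
    omega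
  rw [hookLength, column, card_range]
  omega

variable {M : Type*} [CommMonoid M] (g : ℕ → M)

lemma prod_hookLength_Ico (hμ : Antitone μ) {i r : ℕ} (hir : i ≤ r) (hr : r < l) :
    ∏ j ∈ Ico (μ (r + 1)) (μ r), g (hookLength l μ i j) =
      ∏ t ∈ Ico (μ i + r - (μ r + i) + 1) (μ i + (r + 1) - (μ (r + 1) + i)), g t := by
  have := hμ hir
  have := hμ r.le_succ
  refine prod_nbij' (fun j => μ i + r - (i + j)) (fun t => μ i + r - (i + t)) ?_ ?_ ?_ ?_
    fun j hj => by rw [hookLength_of_mem_Ico hμ hr i hj]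
  all_goals
    intro j hj
    rw [mem_Ico] at *
    omega

lemma prod_hookLength_mul_prod_Ico (hμ : Antitone μ) (hl : μ l = 0) {i : ℕ} (hi : i < l) :
    (∏ j ∈ range (μ i), g (hookLength l μ i j)) * ∏ r ∈ Ico (i + 1) l, g (μ i + r - (μ r + i)) =
      ∏ t ∈ Ico 1 (μ i + l - i), g t := by
  have partial_row {r : ℕ} (hir : i + 1 ≤ r) (hr : r ≤ l) :
      (∏ j ∈ Ico (μ r) (μ i), g (hookLength l μ i j)) *
          ∏ s ∈ Ico (i + 1) r, g (μ i + s - (μ s + i)) =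
        ∏ t ∈ Ico 1 (μ i + r - (μ r + i)), g t := by
    induction r, hir using Nat.le_induction with
    | base => simp [prod_hookLength_Ico g hμ le_rfl hi]
    | succ r hir ih =>
      have hμr : μ (r + 1) ≤ μ r := hμ r.le_succ
      have hμi := hμ (Nat.le_of_succ_le hir)
      rw [← prod_Ico_consecutive _ hμr hμi, prod_hookLength_Ico g hμ (by omega) hr,
        prod_Ico_succ_top hir,
        ← prod_Ico_consecutive g (show 1 ≤ μ i + r - (μ r + i) + 1 by omega) (by omega),
        prod_Ico_succ_top (by omega), ← ih (by omega)]
      ac_rfl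
  simpa [hl] using partial_row hi le_rfl

end HookLength

lemma prod_prod_Ioi_pow {M : Type*} [CommMonoid M] (q : M) (l : ℕ) (μ : ℕ → ℕ) :
    ∏ i : Fin l, ∏ r ∈ Ioi i, q ^ μ r = q ^ ∑ i ∈ range l, i * μ i := by
  rw [prod_comm' (t' := univ) (s' := fun r => Iio r) (by simp),
    ← Fin.sum_univ_eq_sum_range (fun i => i * μ i), ← prod_pow_eq_pow_sum]
  simp [← pow_mul, mul_comm]

section HookContent

variable [Field K] {q : K}

lemma pow_mul_zpow_sub_zpow (hq₀ : q ≠ 0) {i r m n : ℕ} (hir : i ≤ r) (hnm : n ≤ m) :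
    q ^ r * (q ^ (n - r : ℤ) - q ^ (m - i : ℤ)) = q ^ n * (1 - q ^ (m + r - (n + i))) := by
  have exponent : (m - i : ℤ) = n - r + (m + r - (n + i) : ℕ) := by omega
  rw [exponent, zpow_add₀ hq₀, zpow_sub₀ hq₀, zpow_natCast, zpow_natCast, zpow_natCast]
  field_simp

lemma qPochhammer_eq_prod_hookLength_mul (q : K) {l : ℕ} {μ : ℕ → ℕ} (hμ : Antitone μ)
    (hl : μ l = 0) (i : Fin l) :
    qPochhammer q (μ i + l - i - 1) = (∏ j ∈ range (μ i), (1 - q ^ hookLength l μ i j)) *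
      ∏ r ∈ Ioi i, (1 - q ^ (μ i + r - (μ r + i))) := by
  have := prod_hookLength_mul_prod_Ico (fun t => 1 - q ^ t) hμ hl i.isLt
  rw [Ico_add_one_left_eq_Ioo, ← Fin.map_valEmbedding_Ioi, prod_map, prod_Ico_eq_prod_range] at this
  simpa only [Fin.valEmbedding_apply, qPochhammer, add_comm 1] using this.symm

lemma det_inv_qPochhammer_eq_prod_hookLength (hq₀ : q ≠ 0) (hq : ¬ IsOfFinOrder q) {l : ℕ}
    {μ : ℕ → ℕ} (hμ : Antitone μ) (hl : μ l = 0) :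
    Matrix.det (.of fun i j : Fin l =>
        zeroExtend (fun n => (qPochhammer q n)⁻¹) (μ i - i + j)) =
      q ^ (∑ i ∈ range l, i * μ i) *
        ∏ i : Fin l, (∏ j ∈ range (μ i), (1 - q ^ hookLength l μ i j))⁻¹ := by
  rw [det_inv_qPochhammer hq₀ hq fun i : Fin l => (μ i - i : ℤ), ← prod_prod_Ioi_pow,
    ← prod_mul_distrib]
  refine prod_congr rfl fun i _ => ?_
  have row : ∏ r ∈ Ioi i, q ^ (r : ℕ) * (q ^ (μ r - r : ℤ) - q ^ (μ i - i : ℤ)) =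
      (∏ r ∈ Ioi i, q ^ μ r) * ∏ r ∈ Ioi i, (1 - q ^ (μ i + r - (μ r + i))) := by
    rw [← prod_mul_distrib]
    refine prod_congr rfl fun r hr => ?_
    have hir : (i : ℕ) ≤ r := Fin.val_le_of_le (mem_Ioi.1 hr).le
    exact pow_mul_zpow_sub_zpow hq₀ hir (hμ hir)
  have hne := qPochhammer_ne_zero hq (μ i + l - i - 1)
  rw [row, show (μ i - i + l - 1 : ℤ) = (μ i + l - i - 1 : ℕ) by omega, zeroExtend_natCast]
  rw [qPochhammer_eq_prod_hookLength_mul q hμ hl i] at hne ⊢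
  rw [mul_inv, mul_assoc, mul_comm _⁻¹, mul_inv_cancel_left₀ (right_ne_zero_of_mul hne)]

/-- For `K = ℚ(a, b, q)` this is the identity in formal variables. -/
theorem schur_hook_content_general [Algebra ℚ K] (a b : K) (hq₀ : q ≠ 0)
    (hq : ¬ IsOfFinOrder q) {l : ℕ} {μ : ℕ → ℕ} (hμ : Antitone μ) (hl : μ l = 0) :
    powerSumSpec a b q (schur l μ) = q ^ (∑ i ∈ range l, i * μ i) *
      ∏ i ∈ range l, ∏ j ∈ range (μ i),
        (a - b * q ^ ((j : ℤ) - (i : ℤ))) / (1 - q ^ hookLength l μ i j) := by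
  rw [powerSumSpec_schur hq, det_completeSpec hq₀ hq fun i => by omega,
    det_inv_qPochhammer_eq_prod_hookLength hq₀ hq hμ hl, mul_left_comm, ← prod_mul_distrib,
    ← Fin.prod_univ_eq_prod_range]
  simp only [prod_Ico_neg_eq_prod_range, prod_div_distrib, ← div_eq_mul_inv]

end HookContent

/-- The hook-content formula: if each power sum `p_n` is specialized to
`(aⁿ - bⁿ)/(1 - qⁿ)`, then `s_μ = q^{n(μ)} Π_{x ∈ μ} (a - b q^{c(x)})/(1 - q^{h(x)})`,
where for the box `x` in row `i`, column `j` (1-based), `c(x) = j - i` is the content,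
`h(x) = μᵢ + μᵗⱼ - i - j + 1` is the hook length, and `n(μ) = Σᵢ (i-1) μᵢ`.
Here `a, b` are arbitrary reals and `0 < q < 1`. -/
theorem schur_hook_content (a b q : ℝ) (hq0 : 0 < q) (hq1 : q < 1)
    (l : ℕ) (μ : ℕ → ℕ)
    (hmono : ∀ i j, i ≤ j → μ j ≤ μ i)
    (hsupp : ∀ i, l ≤ i → μ i = 0) :
    MvPolynomial.aeval
        (fun k : ℕ => (a ^ (k + 1) - b ^ (k + 1)) / (1 - q ^ (k + 1)))
        (schur l μ)
      = q ^ (∑ i ∈ range l, i * μ i) *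
          ∏ i ∈ range l, ∏ j ∈ range (μ i),
            (a - b * q ^ ((j : ℤ) - (i : ℤ))) /
              (1 - q ^ (μ i + (((range l).filter fun r => j + 1 ≤ μ r).card) - (i + j + 1))) := by
  have hq : ¬ IsOfFinOrder q := fun h =>
    have ⟨_, hn, hqn⟩ := isOfFinOrder_iff_pow_eq_one.1 h
    (pow_lt_one₀ hq0.le hq1 hn.ne').ne hqn
  exact schur_hook_content_general a b hq0.ne' hq hmono (hsupp l le_rfl)
end
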